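/- arXiv:1712.03888 — 4 statements merged into one kernel-verified Lean document; each statement's English description precedes it below -/
import Mathlib

section
/- Let α, β, a be positive real numbers and L_f, L_g nonnegative real numbers. There exist positive real numbers γ and δ such that 1 − α·a/γ > 0, 1 − β·L_f/2 − β·a·δ > 0, 1 − α·L_g/2 − α·a/δ > 0, and 1 − β·L_f/2 − β·a·γ > 0, if and only if α·L_g < 2, β·L_f < 2, and α·β·(a² − L_f·L_g/4) + α·L_g/2 + β·L_f/2 < 1. -/
/-!
The coefficients containing `δ` are positive exactly when `δ` lies strictly between `α a / p` and
`q / (β a)`, where `p = 1 - α L_g / 2` and `q = 1 - β L_f / 2`. For `p, q > 0` such a `δ` exists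
if and only if `(α a) (β a) < p q`, which expands to the third stepsize condition. Since `p ≤ 1`,
the choice `γ = δ` then satisfies the remaining two inequalities.
-/

section OrderedField

variable {K : Type*} [Field K] [LinearOrder K]

theorem exists_pos_pair_div_lt_mul_lt_iff {b c p q r : K} (hpr : p ≤ r) :
    (∃ s t, 0 < s ∧ 0 < t ∧ b / s < r ∧ c * t < q ∧ b / t < p ∧ c * s < q) ↔
      ∃ t, 0 < t ∧ b / t < p ∧ c * t < q := by
  constructor
  · rintro ⟨-, t, -, ht, -, hcq, hbp, -⟩
    exact ⟨t, ht, hbp, hcq⟩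
  · rintro ⟨t, ht, hbp, hcq⟩
    exact ⟨t, t, ht, ht, hbp.trans_le hpr, hcq, hbp, hcq⟩

variable [IsStrictOrderedRing K]

theorem exists_pos_div_lt_and_mul_lt_iff {b c p q : K} (hb : 0 ≤ b) (hc : 0 ≤ c) :
    (∃ t, 0 < t ∧ b / t < p ∧ c * t < q) ↔ 0 < p ∧ 0 < q ∧ b * c < p * q := by
  constructor
  · rintro ⟨t, ht, hbp, hcq⟩
    have hbt : 0 ≤ b / t := by positivity
    have hct : 0 ≤ c * t := by positivity
    refine ⟨hbt.trans_lt hbp, hct.trans_lt hcq, ?_⟩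
    calc b * c = b / t * (c * t) := by field_simp
      _ < p * q := mul_lt_mul'' hbp hcq hbt hct
  · rintro ⟨hp, hq, hbc⟩
    have hpc : 0 < p + c := by positivity
    have hbq : 0 < b + q := by positivity
    -- The mediant of `b / p` and `q / c` lies between them, and also makes sense for `c = 0`.
    refine ⟨(b + q) / (p + c), by positivity, ?_, ?_⟩
    · rw [div_div_eq_mul_div, div_lt_iff₀ hbq]
      linarith
    · rw [← mul_div_assoc, div_lt_iff₀ hpc]
      linarith

theorem mul_lt_one_sub_half_mul_one_sub_half_iff (α β a Lf Lg : K) :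
    α * a * (β * a) < (1 - α * Lg / 2) * (1 - β * Lf / 2) ↔
      α * β * (a ^ 2 - Lf * Lg / 4) + α * Lg / 2 + β * Lf / 2 < 1 := by
  have gap_eq : (1 - α * Lg / 2) * (1 - β * Lf / 2) - α * a * (β * a) =
      1 - (α * β * (a ^ 2 - Lf * Lg / 4) + α * Lg / 2 + β * Lf / 2) := by
    ring
  rw [← sub_pos, gap_eq, sub_pos]

theorem explicit_parameter_equivalence_general {α β a Lg : K} (Lf : K)
    (hα : 0 ≤ α) (hβ : 0 ≤ β) (ha : 0 ≤ a) (hLg : 0 ≤ Lg) :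
    (∃ γ δ : K, 0 < γ ∧ 0 < δ ∧
      0 < 1 - α * a / γ ∧
      0 < 1 - β * Lf / 2 - β * a * δ ∧
      0 < 1 - α * Lg / 2 - α * a / δ ∧
      0 < 1 - β * Lf / 2 - β * a * γ) ↔
    (α * Lg < 2 ∧ β * Lf < 2 ∧
      α * β * (a ^ 2 - Lf * Lg / 4) + α * Lg / 2 + β * Lf / 2 < 1) := by
  have hp_le_one : 1 - α * Lg / 2 ≤ 1 := sub_le_self 1 (by positivity)
  have half_gap_pos (x : K) : 0 < 1 - x / 2 ↔ x < 2 := by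
    rw [sub_pos, div_lt_one two_pos]
  rw [← half_gap_pos (α * Lg), ← half_gap_pos (β * Lf),
    ← mul_lt_one_sub_half_mul_one_sub_half_iff,
    ← exists_pos_div_lt_and_mul_lt_iff (mul_nonneg hα ha) (mul_nonneg hβ ha),
    ← exists_pos_pair_div_lt_mul_lt_iff hp_le_one]
  simp only [sub_pos]

end OrderedField

/-- equivalence between the existence of auxiliary positive parameters `γ, δ`
making all coefficients in the convergence estimate of the explicit scheme positive, and the
stepsize conditions of the convergence theorem (`a` plays the role of `‖A‖`). -/
theorem explicit_parameter_equivalence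
    (α β a Lf Lg : ℝ) (hα : 0 < α) (hβ : 0 < β) (ha : 0 < a)
    (hLf : 0 ≤ Lf) (hLg : 0 ≤ Lg) :
    (∃ γ δ : ℝ, 0 < γ ∧ 0 < δ ∧
      0 < 1 - α * a / γ ∧
      0 < 1 - β * Lf / 2 - β * a * δ ∧
      0 < 1 - α * Lg / 2 - α * a / δ ∧
      0 < 1 - β * Lf / 2 - β * a * γ) ↔
    (α * Lg < 2 ∧ β * Lf < 2 ∧
      α * β * (a ^ 2 - Lf * Lg / 4) + α * Lg / 2 + β * Lf / 2 < 1) :=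
  explicit_parameter_equivalence_general Lf hα.le hβ.le ha.le hLg
end

section
/- Let α, β be positive real numbers and L_f, L_g nonnegative real numbers. There exist positive real numbers γ and δ such that 1 − α/γ > 0, 1 − β·δ > 0, 1 − β·L_f/2 > 0, 1 − α·L_g/2 − α/δ > 0, and 1 − β·γ > 0, if and only if α·L_g < 2, β·L_f < 2, and α·β + α·L_g/2 < 1. -/
/-!
No inequality involves both `γ` and `δ`: each is a `t > 0` subject to `α / t < c` and `β * t < 1`,
with `c = 1` for `γ` and `c = 1 - α * Lg / 2` for `δ`. The first inequality bounds `t` from below,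
and the two are compatible exactly when `c > 0` and `α * β < c`. Since `α * Lg ≥ 0`, solvability
for `δ` implies solvability for `γ`.
-/

section LinearOrderedField

variable {K : Type*} [Field K] [LinearOrder K] [IsStrictOrderedRing K] {a b c d s : K}

theorem exists_gt_mul_lt (h : b * s < d) : ∃ t, s < t ∧ b * t < d := by
  obtain ⟨ε, hε, hbε⟩ := exists_pos_mul_lt (sub_pos.2 h) b
  exact ⟨s + ε, lt_add_of_pos_right s hε, by linarith⟩

theorem exists_pos_div_lt_and_mul_lt_iff_s8 (ha : 0 ≤ a) (hd : 0 < d) :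
    (∃ t, 0 < t ∧ a / t < c ∧ b * t < d) ↔ 0 < c ∧ a * b < c * d := by
  constructor
  · rintro ⟨t, ht, hac, hbd⟩
    have hat : 0 ≤ a / t := div_nonneg ha ht.le
    refine ⟨hat.trans_lt hac, ?_⟩
    calc
      a * b = a / t * (b * t) := by field_simp
      _ ≤ a / t * d := mul_le_mul_of_nonneg_left hbd.le hat
      _ < c * d := mul_lt_mul_of_pos_right hac hd
  · rintro ⟨hc, hab⟩
    have hbd : b * (a / c) < d := by
      rwa [← mul_div_assoc, div_lt_iff₀' hc, mul_comm b]
    obtain ⟨t, hact, hbt⟩ := exists_gt_mul_lt hbd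
    have ht : 0 < t := (div_nonneg ha hc.le).trans_lt hact
    exact ⟨t, ht, (div_lt_comm₀ hc ht).1 hact, hbt⟩

theorem semi_implicit_parameter_equivalence_general {α β Lf Lg : K} (hα : 0 ≤ α) (hLg : 0 ≤ Lg) :
    (∃ γ δ : K, 0 < γ ∧ 0 < δ ∧
      0 < 1 - α / γ ∧
      0 < 1 - β * δ ∧
      0 < 1 - β * Lf / 2 ∧
      0 < 1 - α * Lg / 2 - α / δ ∧
      0 < 1 - β * γ) ↔
    (α * Lg < 2 ∧ β * Lf < 2 ∧ α * β + α * Lg / 2 < 1) := by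
  constructor
  · rintro ⟨γ, δ, -, hδ, -, hβδ, hβLf, hαδ, -⟩
    obtain ⟨hαLg, hαβ⟩ : 0 < 1 - α * Lg / 2 ∧ α * β < (1 - α * Lg / 2) * 1 :=
      (exists_pos_div_lt_and_mul_lt_iff_s8 hα one_pos).1 ⟨δ, hδ, sub_pos.1 hαδ, sub_pos.1 hβδ⟩
    exact ⟨by linarith, by linarith, by linarith⟩
  · rintro ⟨hαLg, hβLf, hsum⟩
    have hαLg_nonneg : 0 ≤ α * Lg := mul_nonneg hα hLg
    obtain ⟨γ, hγ, hαγ, hβγ⟩ : ∃ γ, 0 < γ ∧ α / γ < 1 ∧ β * γ < 1 :=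
      (exists_pos_div_lt_and_mul_lt_iff_s8 hα one_pos).2 ⟨one_pos, by linarith⟩
    obtain ⟨δ, hδ, hαδ, hβδ⟩ : ∃ δ, 0 < δ ∧ α / δ < 1 - α * Lg / 2 ∧ β * δ < 1 :=
      (exists_pos_div_lt_and_mul_lt_iff_s8 hα one_pos).2 ⟨by linarith, by linarith⟩
    exact ⟨γ, δ, hγ, hδ, sub_pos.2 hαγ, sub_pos.2 hβδ, by linarith, sub_pos.2 hαδ, sub_pos.2 hβγ⟩

end LinearOrderedField

/-- equivalence between the existence of auxiliary positive parameters `γ, δ`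
making all coefficients in the convergence estimate of the semi-implicit scheme positive, and
the stepsize conditions of its convergence theorem. -/
theorem semi_implicit_parameter_equivalence
    (α β Lf Lg : ℝ) (hα : 0 < α) (hβ : 0 < β)
    (hLf : 0 ≤ Lf) (hLg : 0 ≤ Lg) :
    (∃ γ δ : ℝ, 0 < γ ∧ 0 < δ ∧
      0 < 1 - α / γ ∧
      0 < 1 - β * δ ∧
      0 < 1 - β * Lf / 2 ∧
      0 < 1 - α * Lg / 2 - α / δ ∧
      0 < 1 - β * γ) ↔
    (α * Lg < 2 ∧ β * Lf < 2 ∧ α * β + α * Lg / 2 < 1) :=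
  semi_implicit_parameter_equivalence_general hα.le hLg
end

section
/- Let V, W be real Hilbert spaces and A : V → W a continuous linear map satisfying: for every nonempty closed convex set O ⊆ V with 0 ∈ O and every u ∈ V, ⟪A(u − Π_O u), A(Π_O u)⟫ ≥ 0. Let C ⊆ V be a nonempty closed convex set. Then for every w ∈ V and every u₀ ∈ C one has ⟪A w − A(Π_C w), A u₀ − A(Π_C w)⟫ ≤ 0. Consequently, if the image A(C) = { A u : u ∈ C } is closed (it is always convex), then A(Π_C w) is the orthogonal projection of A w onto A(C): A(Π_C w) = Π_{A(C)}(A w). -/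
open RealInnerProductSpace

/-!
Translating `C` by `-u₀`, for `u₀ ∈ C`, gives a set containing `0` on which the projection of
`w - u₀` is `Π_C w - u₀`. Condition (Ha) for this set is exactly the variational inequality that
characterises `A (Π_C w)` as the projection of `A w` onto `A(C)`, tested at `A u₀`.
-/

section Projection

variable {E : Type*}

/-- The point `p` is an orthogonal projection of `u` onto `D`, encoded by the variational
inequality; as a relation it makes sense whether or not every point has a projection. -/
structure IsProjectionOnto [SeminormedAddCommGroup E] [InnerProductSpace ℝ E]
    (D : Set E) (u p : E) : Prop where
  mem : p ∈ D
  inner_le_zero : ∀ z ∈ D, ⟪u - p, z - p⟫ ≤ 0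

theorem IsProjectionOnto.preimage_add_right [SeminormedAddCommGroup E] [InnerProductSpace ℝ E]
    {D : Set E} {u p : E} (h : IsProjectionOnto D u p) (a : E) :
    IsProjectionOnto ((· + a) ⁻¹' D) (u - a) (p - a) where
  mem := by simpa using h.mem
  inner_le_zero z hz := by
    rw [sub_sub_sub_cancel_right, ← sub_add, sub_add_eq_add_sub]
    exact h.inner_le_zero (z + a) hz

theorem IsProjectionOnto.unique [NormedAddCommGroup E] [InnerProductSpace ℝ E]
    {D : Set E} {u p q : E} (hp : IsProjectionOnto D u p) (hq : IsProjectionOnto D u q) :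
    p = q := by
  have hsum : ⟪p - q, p - q⟫ = ⟪u - p, q - p⟫ + ⟪u - q, p - q⟫ := by
    rw [← neg_sub p q, inner_neg_right, neg_add_eq_sub, ← inner_sub_left, sub_sub_sub_cancel_left]
  have hnonpos : ⟪p - q, p - q⟫ ≤ 0 :=
    hsum.trans_le (add_nonpos (hp.inner_le_zero q hq.mem) (hq.inner_le_zero p hp.mem))
  exact sub_eq_zero.mp (real_inner_self_nonpos.mp hnonpos)

end Projection

section Image

variable {V W : Type*} [SeminormedAddCommGroup V] [InnerProductSpace ℝ V]

/-- Condition (Ha) on a linear map `A`. For `0 ∈ O` one always has `0 ≤ ⟪u - Π_O u, Π_O u⟫`, and the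
condition asks that this remain true after applying `A`. It is required only at those `u` that have
a projection onto `O`, so that it makes sense in incomplete spaces. -/
def PreservesAcuteProjection [SeminormedAddCommGroup W] [InnerProductSpace ℝ W]
    (A : V →ₗ[ℝ] W) : Prop :=
  ∀ O : Set V, IsClosed O → Convex ℝ O → (0 : V) ∈ O →
    ∀ u p : V, IsProjectionOnto O u p → 0 ≤ ⟪A (u - p), A p⟫

theorem IsProjectionOnto.image [SeminormedAddCommGroup W] [InnerProductSpace ℝ W]
    {A : V →ₗ[ℝ] W} (hA : PreservesAcuteProjection A) {C : Set V} (hCclosed : IsClosed C)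
    (hCconv : Convex ℝ C) {w p : V} (hp : IsProjectionOnto C w p) :
    IsProjectionOnto (A '' C) (A w) (A p) where
  mem := Set.mem_image_of_mem A hp.mem
  inner_le_zero := by
    rintro _ ⟨u₀, hu₀, rfl⟩
    have hacute : 0 ≤ ⟪A (w - u₀ - (p - u₀)), A (p - u₀)⟫ :=
      hA ((· + u₀) ⁻¹' C) (hCclosed.preimage (continuous_add_const u₀))
        (hCconv.translate_preimage_left u₀) (by simpa using hu₀) _ _ (hp.preimage_add_right u₀)
    rw [sub_sub_sub_cancel_right, map_sub, map_sub] at hacute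
    rwa [← neg_sub (A p) (A u₀), inner_neg_right, neg_nonpos]

theorem image_of_projection_is_projection_general [NormedAddCommGroup W] [InnerProductSpace ℝ W]
    {A : V →ₗ[ℝ] W} (hA : PreservesAcuteProjection A) {C : Set V} (hCclosed : IsClosed C)
    (hCconv : Convex ℝ C) {w p : V} (hp : IsProjectionOnto C w p) {q : W} :
    IsProjectionOnto (A '' C) (A w) q ↔ A p = q :=
  ⟨(hp.image hA hCclosed hCconv).unique, fun hq => hq ▸ hp.image hA hCclosed hCconv⟩

end Image

/-- if the continuous linear map `A` satisfies hypothesis (Ha)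
(for every nonempty closed convex `O ∋ 0` and every `u`, `⟪A(u − Π_O u), A(Π_O u)⟫ ≥ 0`),
then for every nonempty closed convex `C`, every `w` and every `u₀ ∈ C` one has
`⟪A w − A(Π_C w), A u₀ − A(Π_C w)⟫ ≤ 0`; consequently, if `A(C)` is closed then
`A(Π_C w)` is the orthogonal projection of `A w` onto `A(C)`. -/
theorem image_of_projection_is_projection
    {V W : Type*} [NormedAddCommGroup V] [InnerProductSpace ℝ V] [CompleteSpace V]
    [NormedAddCommGroup W] [InnerProductSpace ℝ W] [CompleteSpace W]
    (A : V →L[ℝ] W)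
    (hHa : ∀ O : Set V, O.Nonempty → IsClosed O → Convex ℝ O → (0 : V) ∈ O →
      ∀ u w : V, w ∈ O → (∀ z ∈ O, ⟪u - w, z - w⟫ ≤ 0) →
        0 ≤ ⟪A (u - w), A w⟫)
    (C : Set V) (hC : C.Nonempty) (hCclosed : IsClosed C) (hCconv : Convex ℝ C)
    (projC : V → V) (hprojC_mem : ∀ u, projC u ∈ C)
    (hprojC : ∀ u, ∀ z ∈ C, ⟪u - projC u, z - projC u⟫ ≤ 0)
    (projAC : W → W) (hACclosed : IsClosed (A '' C))
    (hprojAC_mem : ∀ q, projAC q ∈ A '' C)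
    (hprojAC : ∀ q, ∀ z ∈ A '' C, ⟪q - projAC q, z - projAC q⟫ ≤ 0) :
    (∀ w : V, ∀ u₀ ∈ C, ⟪A w - A (projC w), A u₀ - A (projC w)⟫ ≤ 0) ∧
    (∀ w : V, A (projC w) = projAC (A w)) := by
  have hiff (w : V) (q : W) : IsProjectionOnto (A '' C) (A w) q ↔ A (projC w) = q :=
    image_of_projection_is_projection_general (A := A.toLinearMap)
      (fun O hcl hcv h0 u p hp => hHa O ⟨0, h0⟩ hcl hcv h0 u p hp.mem hp.inner_le_zero)
      hCclosed hCconv ⟨hprojC_mem w, hprojC w⟩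
  exact ⟨fun w u₀ hu₀ => ((hiff w _).mpr rfl).inner_le_zero _ (Set.mem_image_of_mem A hu₀),
    fun w => (hiff w _).mp ⟨hprojAC_mem (A w), hprojAC (A w)⟩⟩
end

section
/- Let 0 < ε ≤ 2 and define the regularized gradient map h_ε : ℝ² → ℝ² by: h_ε(p) = 0 if ‖p‖ ≤ 1 − ε/2; h_ε(p) = ((2 + ε)/(2ε))·(‖p‖ + ε/2 − 1)·p/‖p‖ if |‖p‖ − 1| ≤ ε/2; and h_ε(p) = p if ‖p‖ ≥ 1 + ε/2. Then h_ε is Lipschitz continuous with constant (2 + ε)/(2ε): ‖h_ε(p) − h_ε(q)‖ ≤ ((2 + ε)/(2ε))·‖p − q‖ for all p, q ∈ ℝ². -/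
/-!
The map is radial: it sends `p` to `φ ‖p‖ • p / ‖p‖` for a scalar profile `φ` with `φ 0 = 0`.
Writing `a = φ ‖p‖ / ‖p‖` and `b = φ ‖q‖ / ‖q‖`, one has
`‖a p - b q‖² = (φ ‖p‖ - φ ‖q‖)² + 2ab (‖p‖ ‖q‖ - ⟪p, q⟫)`. If `φ` is `K`-Lipschitz, then also
`|a|, |b| ≤ K`, so each of the two terms is at most `K²` times the corresponding term of
`‖p - q‖²`. Hence a radial map inherits the Lipschitz constant of its profile.

For `ε ≤ 2` the slope `K = (2 + ε) / (2ε)` is at least `1`, and the line of slope `K` through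
`(1 - ε/2, 0)` meets the diagonal at `1 + ε/2`. So, for `r ≥ 0`, the profile is
`min r (max 0 (K (r - 1 + ε/2)))`, and it is `K`-Lipschitz as a lattice
combination of `K`-Lipschitz functions.
-/

open Set
open scoped NNReal RealInnerProductSpace

section Radial

/-- The radial map `p ↦ φ ‖p‖ • p / ‖p‖` with profile `φ`. Division by zero makes it vanish
wherever `‖p‖ = 0`. -/
noncomputable def radialMap {E : Type*} [SeminormedAddCommGroup E] [NormedSpace ℝ E]
    (φ : ℝ → ℝ) (p : E) : E :=
  (φ ‖p‖ / ‖p‖) • p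

variable {E : Type*} [SeminormedAddCommGroup E] [InnerProductSpace ℝ E]

theorem norm_smul_sub_smul_sq (a b : ℝ) (p q : E) :
    ‖a • p - b • q‖ ^ 2 = (a * ‖p‖ - b * ‖q‖) ^ 2 + 2 * (a * b) * (‖p‖ * ‖q‖ - ⟪p, q⟫) := by
  rw [norm_sub_sq_real, norm_smul, norm_smul, real_inner_smul_left, real_inner_smul_right,
    mul_pow, mul_pow, Real.norm_eq_abs, Real.norm_eq_abs, sq_abs, sq_abs]
  ring

theorem norm_smul_sub_smul_le {a b K : ℝ} {p q : E} (ha : |a| ≤ K) (hb : |b| ≤ K)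
    (hab : |a * ‖p‖ - b * ‖q‖| ≤ K * |‖p‖ - ‖q‖|) :
    ‖a • p - b • q‖ ≤ K * ‖p - q‖ := by
  have hK : 0 ≤ K := (abs_nonneg a).trans ha
  have hradial : (a * ‖p‖ - b * ‖q‖) ^ 2 ≤ K ^ 2 * (‖p‖ - ‖q‖) ^ 2 := by
    simpa only [mul_pow, sq_abs] using pow_le_pow_left₀ (abs_nonneg _) hab 2
  have hcoef : a * b ≤ K ^ 2 :=
    calc a * b ≤ |a| * |b| := (le_abs_self _).trans_eq (abs_mul a b)
      _ ≤ K * K := mul_le_mul ha hb (abs_nonneg b) hK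
      _ = K ^ 2 := (sq K).symm
  have hangle : 0 ≤ ‖p‖ * ‖q‖ - ⟪p, q⟫ := sub_nonneg.2 (real_inner_le_norm p q)
  have hpq : ‖p - q‖ ^ 2 = (‖p‖ - ‖q‖) ^ 2 + 2 * (‖p‖ * ‖q‖ - ⟪p, q⟫) := by
    simpa using norm_smul_sub_smul_sq 1 1 p q
  refine le_of_sq_le_sq ?_ (by positivity)
  calc ‖a • p - b • q‖ ^ 2
      = (a * ‖p‖ - b * ‖q‖) ^ 2 + 2 * (a * b) * (‖p‖ * ‖q‖ - ⟪p, q⟫) :=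
        norm_smul_sub_smul_sq a b p q
    _ ≤ K ^ 2 * (‖p‖ - ‖q‖) ^ 2 + 2 * K ^ 2 * (‖p‖ * ‖q‖ - ⟪p, q⟫) := by gcongr
    _ = (K * ‖p - q‖) ^ 2 := by rw [mul_pow, hpq]; ring

theorem lipschitzWith_radialMap {K : ℝ≥0} {φ : ℝ → ℝ} (hφ : LipschitzOnWith K φ (Ici 0))
    (hφ0 : φ 0 = 0) : LipschitzWith K (radialMap φ : E → E) := by
  have hcoef (p : E) : |φ ‖p‖ / ‖p‖| ≤ K := by
    rw [abs_div, abs_norm]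
    refine div_le_of_le_mul₀ (norm_nonneg p) K.coe_nonneg ?_
    simpa [Real.dist_eq, hφ0] using hφ.dist_le_mul ‖p‖ (norm_nonneg p) 0 self_mem_Ici
  have hprofile (p : E) : φ ‖p‖ / ‖p‖ * ‖p‖ = φ ‖p‖ :=
    div_mul_cancel_of_imp fun hp => by rw [hp, hφ0]
  refine LipschitzWith.of_dist_le_mul fun p q => ?_
  rw [dist_eq_norm, dist_eq_norm]
  refine norm_smul_sub_smul_le (hcoef p) (hcoef q) ?_
  rw [hprofile, hprofile]
  exact hφ.dist_le_mul ‖p‖ (norm_nonneg p) ‖q‖ (norm_nonneg q)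

end Radial

section DeadZoneRamp

/-- The piecewise affine profile which, for `0 ≤ r` and `0 ≤ K`, vanishes up to `r = a` and then
follows the line of slope `K` through `(a, 0)` wherever this line lies below the diagonal, and the
diagonal elsewhere. -/
def deadZoneRamp (K a r : ℝ) : ℝ := min r (max 0 (K * (r - a)))

theorem deadZoneRamp_zero_right (K a : ℝ) : deadZoneRamp K a 0 = 0 :=
  min_eq_left (le_max_left _ _)

theorem lipschitzWith_deadZoneRamp {K : ℝ≥0} (hK : 1 ≤ K) (a : ℝ) :
    LipschitzWith K (deadZoneRamp K a) := by
  have hline : LipschitzWith K fun r : ℝ => (K : ℝ) * (r - a) :=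
    LipschitzWith.of_dist_le_mul fun r s => by
      rw [Real.dist_eq, Real.dist_eq, ← mul_sub, sub_sub_sub_cancel_right, abs_mul, NNReal.abs_eq]
  exact (LipschitzWith.id.min (hline.const_max 0)).weaken (max_le hK le_rfl)

variable {K a r : ℝ}

theorem deadZoneRamp_of_le (hK : 0 ≤ K) (hr : 0 ≤ r) (hra : r ≤ a) : deadZoneRamp K a r = 0 := by
  rw [deadZoneRamp, max_eq_left (mul_nonpos_of_nonneg_of_nonpos hK (sub_nonpos.2 hra)),
    min_eq_right hr]

theorem deadZoneRamp_of_mul_sub_le (hK : 0 ≤ K) (har : a ≤ r) (hr : K * (r - a) ≤ r) :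
    deadZoneRamp K a r = K * (r - a) := by
  rw [deadZoneRamp, max_eq_right (mul_nonneg hK (sub_nonneg.2 har)), min_eq_right hr]

theorem deadZoneRamp_of_le_mul_sub (hr : r ≤ K * (r - a)) : deadZoneRamp K a r = r :=
  min_eq_left (hr.trans (le_max_right _ _))

end DeadZoneRamp

section RegularizedGradient

variable {E : Type*} [SeminormedAddCommGroup E] [NormedSpace ℝ E] {ε : ℝ}

/-- The `ε`-regularized gradient map `h_ε` of `φ*(p) = (1/2)·max(‖p‖² − 1, 0)` on a real normed
space. Where the closed regions of the informal definition overlap, the earlier branch is taken. -/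
noncomputable def regularizedGradient (ε : ℝ) (p : E) : E :=
  if ‖p‖ ≤ 1 - ε / 2 then 0
  else if ‖p‖ ≤ 1 + ε / 2 then ((2 + ε) / (2 * ε) * (‖p‖ + ε / 2 - 1) / ‖p‖) • p
  else p

theorem slope_mul_sub_eq_self_add (hε : ε ≠ 0) (r : ℝ) :
    (2 + ε) / (2 * ε) * (r - (1 - ε / 2)) = r + (2 - ε) / (2 * ε) * (r - (1 + ε / 2)) := by
  field_simp
  ring

theorem regularizedGradient_eq_radialMap (hε0 : 0 < ε) (hε2 : ε ≤ 2) (p : E) :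
    regularizedGradient ε p = radialMap (deadZoneRamp ((2 + ε) / (2 * ε)) (1 - ε / 2)) p := by
  have hslope : 0 ≤ (2 + ε) / (2 * ε) := by positivity
  have hexcess : 0 ≤ (2 - ε) / (2 * ε) := div_nonneg (sub_nonneg.2 hε2) (by positivity)
  have hline := slope_mul_sub_eq_self_add hε0.ne' ‖p‖
  rw [regularizedGradient, radialMap]
  split_ifs with hinner hannulus
  · rw [deadZoneRamp_of_le hslope (norm_nonneg p) hinner, zero_div, zero_smul]
  · have hbelow : (2 + ε) / (2 * ε) * (‖p‖ - (1 - ε / 2)) ≤ ‖p‖ := by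
      rw [hline]
      exact add_le_of_nonpos_right
        (mul_nonpos_of_nonneg_of_nonpos hexcess (sub_nonpos.2 hannulus))
    rw [deadZoneRamp_of_mul_sub_le hslope (le_of_not_ge hinner) hbelow, sub_sub_eq_add_sub]
  · have habove : ‖p‖ ≤ (2 + ε) / (2 * ε) * (‖p‖ - (1 - ε / 2)) := by
      rw [hline]
      exact le_add_of_nonneg_right (mul_nonneg hexcess (sub_nonneg.2 (le_of_not_ge hannulus)))
    have hp : ‖p‖ ≠ 0 := by linarith
    rw [deadZoneRamp_of_le_mul_sub habove, div_self hp, one_smul]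

end RegularizedGradient

theorem regularized_gradient_lipschitz_general {E : Type*} [SeminormedAddCommGroup E]
    [InnerProductSpace ℝ E] {ε : ℝ} (hε0 : 0 < ε) (hε2 : ε ≤ 2) (p q : E) :
    ‖regularizedGradient ε p - regularizedGradient ε q‖ ≤ (2 + ε) / (2 * ε) * ‖p - q‖ := by
  let K : ℝ≥0 := ⟨(2 + ε) / (2 * ε), by positivity⟩
  have hK : 1 ≤ K := by
    rw [← NNReal.coe_le_coe]
    exact (one_le_div (by positivity)).2 (by linarith)
  have hlip : LipschitzWith K (radialMap (deadZoneRamp K (1 - ε / 2)) : E → E) :=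
    lipschitzWith_radialMap (lipschitzWith_deadZoneRamp hK _).lipschitzOnWith
      (deadZoneRamp_zero_right _ _)
  rw [regularizedGradient_eq_radialMap hε0 hε2, regularizedGradient_eq_radialMap hε0 hε2]
  exact hlip.norm_sub_le p q

/-- the `ε`-regularized gradient map `h_ε` of the Fenchel conjugate
`φ*(p) = (1/2)·max(‖p‖² − 1, 0)` — equal to `0` for `‖p‖ ≤ 1 − ε/2`, to
`((2+ε)/(2ε))·(‖p‖ + ε/2 − 1)·p/‖p‖` for `|‖p‖ − 1| ≤ ε/2`, and to `p` for
`‖p‖ ≥ 1 + ε/2` — is Lipschitz with constant `(2 + ε)/(2ε)`. -/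
theorem regularized_gradient_lipschitz
    (ε : ℝ) (hε0 : 0 < ε) (hε2 : ε ≤ 2)
    (h : EuclideanSpace ℝ (Fin 2) → EuclideanSpace ℝ (Fin 2))
    (hdef : ∀ p, h p =
      if ‖p‖ ≤ 1 - ε / 2 then 0
      else if ‖p‖ ≤ 1 + ε / 2 then
        ((2 + ε) / (2 * ε) * (‖p‖ + ε / 2 - 1) / ‖p‖) • p
      else p) :
    ∀ p q, ‖h p - h q‖ ≤ (2 + ε) / (2 * ε) * ‖p - q‖ := by
  obtain rfl : h = regularizedGradient ε := funext hdef
  exact regularized_gradient_lipschitz_general hε0 hε2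
end
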